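/- Let T > 0, let q : [0, T) → ℝ be continuous, and let x : [0, T) → ℝ be twice differentiable with x(t) > 0 and x″(t) + q(t)·x(t) ≤ 0 for all t ∈ [0, T). Then there do not exist k > 1/4 and t₁ ∈ [0, T) such that q(t) ≥ k/(T − t)² for all t ∈ [t₁, T). -/

import Mathlib

/-!
The Liouville substitution `s = -log (T - t)`, `x = √(T - t) * y` turns the borderline equation
`x'' + x / (4 * (T - t) ^ 2) = 0` into `y'' = 0`. When `q ≥ (1 / 4 + ω ^ 2) / (T - t) ^ 2`, the
logarithmic derivative `u` of `y` with respect to `s` therefore satisfies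
`du/ds ≤ -(u ^ 2 + ω ^ 2)`, so `arctan (u / ω)` decreases at rate at least `ω` in `s`. As `arctan`
has oscillation less than `π`, positivity of `x` can only last for a range of `s` shorter than
`π / ω`, whereas `s → ∞` as `t → T`.
-/

open Set Filter Topology Real

section Riccati

variable {u u' s s' : ℝ → ℝ} {a b ω : ℝ}

theorem antitoneOn_arctan_add_of_riccati_le {D : Set ℝ} (hD : Convex ℝ D) (hω : 0 < ω)
    (hu : ContinuousOn u D) (hs : ContinuousOn s D)
    (hu' : ∀ t ∈ interior D, HasDerivAt u (u' t) t)
    (hs' : ∀ t ∈ interior D, HasDerivAt s (s' t) t)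
    (hle : ∀ t ∈ interior D, u' t ≤ -(s' t * (u t ^ 2 + ω ^ 2))) :
    AntitoneOn (fun t ↦ arctan (u t / ω) + ω * s t) D := by
  refine antitoneOn_of_hasDerivWithinAt_nonpos hD (by fun_prop)
    (fun t ht ↦ (((hu' t ht).div_const ω).arctan.add
      ((hs' t ht).const_mul ω)).hasDerivWithinAt) fun t ht ↦ ?_
  calc 1 / (1 + (u t / ω) ^ 2) * (u' t / ω) + ω * s' t
      = ω / (u t ^ 2 + ω ^ 2) * (u' t + s' t * (u t ^ 2 + ω ^ 2)) := by
        field_simp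
        ring
    _ ≤ 0 := mul_nonpos_of_nonneg_of_nonpos (by positivity) (by linarith [hle t ht])

theorem mul_sub_lt_pi_of_riccati_le (hab : a ≤ b) (hω : 0 < ω)
    (hu : ContinuousOn u (Icc a b)) (hs : ContinuousOn s (Icc a b))
    (hu' : ∀ t ∈ Ioo a b, HasDerivAt u (u' t) t) (hs' : ∀ t ∈ Ioo a b, HasDerivAt s (s' t) t)
    (hle : ∀ t ∈ Ioo a b, u' t ≤ -(s' t * (u t ^ 2 + ω ^ 2))) :
    ω * (s b - s a) < π := by
  rw [← interior_Icc] at hu' hs' hle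
  have hanti := antitoneOn_arctan_add_of_riccati_le (convex_Icc a b) hω hu hs hu' hs' hle
    (left_mem_Icc.2 hab) (right_mem_Icc.2 hab) hab
  linarith [arctan_lt_pi_div_two (u a / ω), neg_pi_div_two_lt_arctan (u b / ω)]

end Riccati

theorem hasDerivAt_logDeriv {𝕜 𝕜' : Type*} [NontriviallyNormedField 𝕜] [NontriviallyNormedField 𝕜']
    [NormedAlgebra 𝕜 𝕜'] {x : 𝕜 → 𝕜'} {t : 𝕜}
    (hx : DifferentiableAt 𝕜 x t) (hx2 : DifferentiableAt 𝕜 (deriv x) t) (hxt : x t ≠ 0) :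
    HasDerivAt (logDeriv x) (deriv (deriv x) t / x t - logDeriv x t ^ 2) t := by
  refine (hx2.hasDerivAt.div hx.hasDerivAt hxt).congr_deriv ?_
  rw [logDeriv_apply]
  field_simp

/-- The logarithmic derivative `d(log y)/ds` of the Liouville transform `y = x / √(T - t)` with
respect to `s = -log (T - t)`, expressed through the logarithmic derivative of `x` in `t`. -/
noncomputable def liouvilleLogDeriv (T : ℝ) (x : ℝ → ℝ) (t : ℝ) : ℝ :=
  (T - t) * logDeriv x t + 1 / 2

section Euler

variable {T ω a b t : ℝ} {x : ℝ → ℝ}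

theorem hasDerivAt_liouvilleLogDeriv (htT : t ≠ T) (hx : DifferentiableAt ℝ x t)
    (hx2 : DifferentiableAt ℝ (deriv x) t) (hxt : x t ≠ 0) :
    HasDerivAt (liouvilleLogDeriv T x)
      ((T - t) * (deriv (deriv x) t / x t) - (liouvilleLogDeriv T x t ^ 2 - 1 / 4) / (T - t))
      t := by
  have hTt : T - t ≠ 0 := sub_ne_zero.2 htT.symm
  refine ((((hasDerivAt_id' t).const_sub T).mul (hasDerivAt_logDeriv hx hx2 hxt)).add_const
    (1 / 2)).congr_deriv ?_
  rw [liouvilleLogDeriv]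
  field_simp
  ring

theorem deriv_liouvilleLogDeriv_le (htT : t < T) (hx : DifferentiableAt ℝ x t)
    (hx2 : DifferentiableAt ℝ (deriv x) t) (hxt : 0 < x t)
    (hjac : deriv (deriv x) t + (1 / 4 + ω ^ 2) / (T - t) ^ 2 * x t ≤ 0) :
    deriv (liouvilleLogDeriv T x) t ≤
      -((T - t)⁻¹ * (liouvilleLogDeriv T x t ^ 2 + ω ^ 2)) := by
  have hTt : 0 < T - t := sub_pos.2 htT
  have hquot : deriv (deriv x) t / x t ≤ -((1 / 4 + ω ^ 2) / (T - t) ^ 2) := by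
    rw [div_le_iff₀ hxt]
    linarith
  calc deriv (liouvilleLogDeriv T x) t
      = (T - t) * (deriv (deriv x) t / x t) - (liouvilleLogDeriv T x t ^ 2 - 1 / 4) / (T - t) :=
        (hasDerivAt_liouvilleLogDeriv htT.ne hx hx2 hxt.ne').deriv
    _ ≤ (T - t) * -((1 / 4 + ω ^ 2) / (T - t) ^ 2)
          - (liouvilleLogDeriv T x t ^ 2 - 1 / 4) / (T - t) := by gcongr
    _ = -((T - t)⁻¹ * (liouvilleLogDeriv T x t ^ 2 + ω ^ 2)) := by
        field_simp
        ring

/- The constant `π` is sharp: `√(T - t) * sin (-ω * log (T - t))` solves the Euler equation, and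
its consecutive zeros are exactly `π / ω` apart in `-log (T - t)`. -/
theorem mul_log_div_lt_pi_of_deriv_deriv_add_le (hω : 0 < ω) (hab : a ≤ b) (hbT : b < T)
    (hx : ∀ t ∈ Icc a b, DifferentiableAt ℝ x t)
    (hx2 : ∀ t ∈ Icc a b, DifferentiableAt ℝ (deriv x) t) (hpos : ∀ t ∈ Icc a b, 0 < x t)
    (hjac : ∀ t ∈ Ioo a b, deriv (deriv x) t + (1 / 4 + ω ^ 2) / (T - t) ^ 2 * x t ≤ 0) :
    ω * log ((T - a) / (T - b)) < π := by
  have htT : ∀ t ∈ Icc a b, t < T := fun t ht ↦ ht.2.trans_lt hbT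
  have hu t (ht : t ∈ Icc a b) :=
    (hasDerivAt_liouvilleLogDeriv (htT t ht).ne (hx t ht) (hx2 t ht)
      (hpos t ht).ne').differentiableAt.hasDerivAt
  have hs t (ht : t ∈ Icc a b) : HasDerivAt (fun t ↦ -log (T - t)) (T - t)⁻¹ t := by
    refine (((hasDerivAt_id' t).const_sub T).log (sub_pos.2 (htT t ht)).ne').neg.congr_deriv ?_
    rw [neg_div, neg_neg, one_div]
  have hriccati := mul_sub_lt_pi_of_riccati_le hab hω (HasDerivAt.continuousOn hu)
    (HasDerivAt.continuousOn hs) (fun t ht ↦ hu t (Ioo_subset_Icc_self ht))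
    (fun t ht ↦ hs t (Ioo_subset_Icc_self ht)) fun t ht ↦
      have htab := Ioo_subset_Icc_self ht
      deriv_liouvilleLogDeriv_le (htT t htab) (hx t htab) (hx2 t htab) (hpos t htab) (hjac t ht)
  rwa [log_div (sub_pos.2 (hab.trans_lt hbT)).ne' (sub_pos.2 hbT).ne', ← neg_sub_neg]

end Euler

theorem exists_mem_Ico_log_sub_div_sub_eq {a T c : ℝ} (haT : a < T) (hc : 0 ≤ c) :
    ∃ b ∈ Ico a T, log ((T - a) / (T - b)) = c := by
  have hTa : 0 < T - a := sub_pos.2 haT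
  refine ⟨T - (T - a) / exp c, ⟨?_, sub_lt_self _ (by positivity)⟩, ?_⟩
  · linarith [div_le_self hTa.le (one_le_exp hc)]
  · rw [sub_sub_cancel, div_div_cancel₀ hTa.ne', log_exp]

theorem tidal_curvature_growth_bound_general {T k : ℝ} {q x : ℝ → ℝ} (hk : 1 / 4 < k)
    (hx : ∀ᶠ t in 𝓝[<] T, DifferentiableAt ℝ x t)
    (hx2 : ∀ᶠ t in 𝓝[<] T, DifferentiableAt ℝ (deriv x) t)
    (hxpos : ∀ᶠ t in 𝓝[<] T, 0 < x t)
    (hjac : ∀ᶠ t in 𝓝[<] T, deriv (deriv x) t + q t * x t ≤ 0) :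
    ¬ ∀ᶠ t in 𝓝[<] T, k / (T - t) ^ 2 ≤ q t := by
  intro hqk
  obtain ⟨ω, hω, rfl⟩ : ∃ ω : ℝ, 0 < ω ∧ k = 1 / 4 + ω ^ 2 :=
    ⟨√(k - 1 / 4), sqrt_pos.2 (by linarith), by rw [sq_sqrt (by linarith)]; ring⟩
  have heuler : ∀ᶠ t in 𝓝[<] T,
      deriv (deriv x) t + (1 / 4 + ω ^ 2) / (T - t) ^ 2 * x t ≤ 0 := by
    filter_upwards [hxpos, hjac, hqk] with t hpos hj hq
    linarith [mul_le_mul_of_nonneg_right hq hpos.le]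
  obtain ⟨a, haT, ha⟩ := mem_nhdsLT_iff_exists_Ico_subset.1
    (hx.and (hx2.and (hxpos.and heuler)))
  obtain ⟨b, ⟨hab, hbT⟩, hlog⟩ :=
    exists_mem_Ico_log_sub_div_sub_eq haT (c := π / ω) (by positivity)
  have hsub : Icc a b ⊆ Ico a T := Icc_subset_Ico_right hbT
  have hlt : ω * log ((T - a) / (T - b)) < π :=
    mul_log_div_lt_pi_of_deriv_deriv_add_le hω hab hbT (fun t ht ↦ (ha (hsub ht)).1)
      (fun t ht ↦ (ha (hsub ht)).2.1) (fun t ht ↦ (ha (hsub ht)).2.2.1)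
      fun t ht ↦ (ha (hsub (Ioo_subset_Icc_self ht))).2.2.2
  exact hlt.ne (by rw [hlog, mul_div_cancel₀ _ hω.ne'])

/-- Curvature growth bound along maximal incomplete geodesics: if the Jacobi
inequality `x'' + q·x ≤ 0` admits a positive twice-differentiable solution on
`[0, T)`, then the tidal curvature `q` cannot satisfy `q t ≥ k/(T - t)²` near
`T` for any `k > 1/4`. -/
theorem tidal_curvature_growth_bound
    (T : ℝ) (hT : 0 < T) (q x : ℝ → ℝ)
    (hq : ContinuousOn q (Set.Ico 0 T))
    (hx : ∀ t : ℝ, 0 ≤ t → t < T → DifferentiableAt ℝ x t)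
    (hx2 : ∀ t : ℝ, 0 ≤ t → t < T → DifferentiableAt ℝ (deriv x) t)
    (hxpos : ∀ t : ℝ, 0 ≤ t → t < T → 0 < x t)
    (hjac : ∀ t : ℝ, 0 ≤ t → t < T → deriv (deriv x) t + q t * x t ≤ 0) :
    ¬ ∃ k : ℝ, 1 / 4 < k ∧ ∃ t₁ : ℝ, 0 ≤ t₁ ∧ t₁ < T ∧
      ∀ t : ℝ, t₁ ≤ t → t < T → k / (T - t) ^ 2 ≤ q t := by
  rintro ⟨k, hk, t₁, -, ht₁, hqk⟩
  have near {a : ℝ} {P : ℝ → Prop} (ha : a < T) (h : ∀ t, a ≤ t → t < T → P t) :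
      ∀ᶠ t in 𝓝[<] T, P t :=
    eventually_of_mem (Ico_mem_nhdsLT ha) fun t ht ↦ h t ht.1 ht.2
  exact tidal_curvature_growth_bound_general hk (near hT hx) (near hT hx2) (near hT hxpos)
    (near hT hjac) (near ht₁ hqk)
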